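/- There exists a 2-(24,4,1) packing with 42 blocks whose leave is a vertex-disjoint union of one cycle of length 4 and one cycle of length 20, covering all 24 points (leave type 4^1 20^1). -/

import Mathlib

/-!
Let `s` be the successor map of the cycles `(0 1 2 3)` and `(4 5 … 23)` on the points. Each block
covers 6 pairs of points, the cycles have 24 edges, and `42 * 6 + 24 = 276` is the number of all
pairs. Hence if 42 blocks and the cycle edges together cover every pair, each pair is covered
exactly once: the blocks form a packing and the cycle edges are its leave. The blocks are found by
prescribing the automorphism `s^5`, which has order 4: twelve base blocks suffice, nine with orbits
of size 4 and three with orbits of size 2.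
-/

/-- A 2-(24,4,1) packing: a collection of 4-element blocks on 24 points such that
every pair of distinct points lies in at most one block. -/
def IsPacking (B : Finset (Finset (Fin 24))) : Prop :=
  (∀ b ∈ B, b.card = 4) ∧
  ∀ p q : Fin 24, p ≠ q → ∀ b₁ ∈ B, ∀ b₂ ∈ B,
    p ∈ b₁ → q ∈ b₁ → p ∈ b₂ → q ∈ b₂ → b₁ = b₂

/-- Adjacency in the leave of a packing: the pair of distinct points is covered by no block. -/
def LeaveAdj (B : Finset (Finset (Fin 24))) (p q : Fin 24) : Prop :=
  p ≠ q ∧ ∀ b ∈ B, ¬ (p ∈ b ∧ q ∈ b)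

/-- The leave of the packing `B` is a vertex-disjoint union of cycles whose lengths are
given by the list `L`, covering all 24 points. -/
def LeaveIsCycleType (B : Finset (Finset (Fin 24))) (L : List ℕ) : Prop :=
  ∃ f : (i : Fin L.length) → ZMod (L.get i) → Fin 24,
    Function.Bijective (fun x : Σ i : Fin L.length, ZMod (L.get i) => f x.1 x.2) ∧
    ∀ p q : Fin 24, LeaveAdj B p q ↔
      ∃ i k, (p = f i k ∧ q = f i (k + 1)) ∨ (q = f i k ∧ p = f i (k + 1))

open Finset

theorem sum_card_filter_mem_offDiag {α ι : Type*} [Fintype α] [DecidableEq α] [Fintype ι]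
    (b : ι → Finset α) :
    ∑ x ∈ (univ : Finset α).offDiag, #{i | x ∈ (b i).offDiag} = ∑ i, #(b i).offDiag := by
  have filter_offDiag (i : ι) :
      {x ∈ (univ : Finset α).offDiag | x ∈ (b i).offDiag} = (b i).offDiag := by
    rw [filter_mem_eq_inter, inter_eq_right]
    exact offDiag_mono (subset_univ _)
  calc
    _ = ∑ i, #{x ∈ (univ : Finset α).offDiag | x ∈ (b i).offDiag} :=
      sum_card_bipartiteAbove_eq_sum_card_bipartiteBelow _
    _ = _ := by simp only [filter_offDiag]

theorem eq_of_mem_offDiag_of_sum_card_offDiag_le {α ι : Type*} [Fintype α] [Fintype ι]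
    {b : ι → Finset α} (cover : ∀ x ∈ (univ : Finset α).offDiag, ∃ i, x ∈ (b i).offDiag)
    (count : ∑ i, #(b i).offDiag ≤ #(univ : Finset α).offDiag)
    {i j : ι} {x : α × α} (hi : x ∈ (b i).offDiag) (hj : x ∈ (b j).offDiag) : i = j := by
  classical
  have one_le : ∀ y ∈ (univ : Finset α).offDiag, 1 ≤ #{i | y ∈ (b i).offDiag} := fun y hy => by
    obtain ⟨k, hk⟩ := cover y hy
    exact card_pos.2 ⟨k, mem_filter_univ k |>.2 hk⟩
  have sum_eq : ∑ _y ∈ (univ : Finset α).offDiag, 1 =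
      ∑ y ∈ (univ : Finset α).offDiag, #{i | y ∈ (b i).offDiag} :=
    (sum_le_sum one_le).antisymm <| by
      rwa [sum_card_filter_mem_offDiag, ← card_eq_sum_ones]
  have eq_one := (sum_eq_sum_iff_of_le one_le).1 sum_eq x (offDiag_mono (subset_univ _) hi)
  exact card_le_one.1 eq_one.ge i (mem_filter_univ i |>.2 hi) j (mem_filter_univ j |>.2 hj)

/-- The blocks of `B` together with the edges `{p, s p}` of the functional graph of `s`, as one
indexed family of point sets. -/
def blocksAndEdges {α : Type*} [DecidableEq α] (B : Finset (Finset α)) (s : α → α) :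
    B ⊕ α → Finset α :=
  Sum.elim Subtype.val fun p => {p, s p}

theorem sum_card_offDiag_blocksAndEdges {α : Type*} [Fintype α] [DecidableEq α]
    {B : Finset (Finset α)} {s : α → α} {k : ℕ} (card_block : ∀ b ∈ B, #b = k)
    (succ_ne : ∀ p, s p ≠ p) :
    ∑ i, #(blocksAndEdges B s i).offDiag = #B * (k * k - k) + Fintype.card α * 2 := by
  have block (b : B) : #(b : Finset α).offDiag = k * k - k := by
    rw [offDiag_card, card_block b b.2]
  have edge (p : α) : #({p, s p} : Finset α).offDiag = 2 := by
    rw [offDiag_card, card_pair (succ_ne p).symm]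
  simp only [blocksAndEdges, Fintype.sum_sum_type, Sum.elim_inl, Sum.elim_inr, block, edge,
    sum_const, card_univ, Fintype.card_coe, smul_eq_mul]

/-- At most 42 blocks of size 4 which, together with the edges `{p, s p}`, cover every pair of
points. This is the finite condition to be checked on a concrete family of blocks. -/
structure IsBlockEdgeCover (B : Finset (Finset (Fin 24))) (s : Fin 24 → Fin 24) : Prop where
  card_block : ∀ b ∈ B, #b = 4
  card_le : #B ≤ 42
  succ_ne : ∀ p, s p ≠ p
  cover : ∀ p q, p ≠ q → (∃ b ∈ B, p ∈ b ∧ q ∈ b) ∨ q = s p ∨ p = s q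

namespace IsBlockEdgeCover

variable {B : Finset (Finset (Fin 24))} {s : Fin 24 → Fin 24}

theorem eq_of_mem_blocksAndEdges (h : IsBlockEdgeCover B s)
    {i j : B ⊕ Fin 24} {p q : Fin 24} (hpq : p ≠ q)
    (hi : p ∈ blocksAndEdges B s i ∧ q ∈ blocksAndEdges B s i)
    (hj : p ∈ blocksAndEdges B s j ∧ q ∈ blocksAndEdges B s j) : i = j := by
  refine eq_of_mem_offDiag_of_sum_card_offDiag_le (b := blocksAndEdges B s) (x := (p, q)) ?_ ?_
    (mem_offDiag.2 ⟨hi.1, hi.2, hpq⟩) (mem_offDiag.2 ⟨hj.1, hj.2, hpq⟩)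
  · rintro ⟨p, q⟩ hmem
    have hne : p ≠ q := (mem_offDiag.1 hmem).2.2
    rcases h.cover p q hne with ⟨b, hb, hp, hq⟩ | rfl | rfl
    · exact ⟨.inl ⟨b, hb⟩, mem_offDiag.2 ⟨hp, hq, hne⟩⟩
    · exact ⟨.inr p, by simpa [blocksAndEdges] using hne⟩
    · exact ⟨.inr q, by simpa [blocksAndEdges] using hne⟩
  · rw [sum_card_offDiag_blocksAndEdges h.card_block h.succ_ne, offDiag_card, card_univ,
      Fintype.card_fin]
    have := h.card_le
    lia

theorem isPacking (h : IsBlockEdgeCover B s) : IsPacking B := by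
  refine ⟨h.card_block, fun p q hpq b₁ h₁ b₂ h₂ hp₁ hq₁ hp₂ hq₂ => ?_⟩
  have index_eq := h.eq_of_mem_blocksAndEdges
    (i := .inl ⟨b₁, h₁⟩) (j := .inl ⟨b₂, h₂⟩) hpq ⟨hp₁, hq₁⟩ ⟨hp₂, hq₂⟩
  exact congrArg Subtype.val (Sum.inl_injective index_eq)

theorem leaveAdj_iff (h : IsBlockEdgeCover B s) (p q : Fin 24) :
    LeaveAdj B p q ↔ q = s p ∨ p = s q := by
  have edge_uncovered (p : Fin 24) : ∀ b ∈ B, ¬ (p ∈ b ∧ s p ∈ b) := fun b hb hmem =>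
    Sum.inl_ne_inr <| h.eq_of_mem_blocksAndEdges
      (i := .inl ⟨b, hb⟩) (j := .inr p) (h.succ_ne p).symm hmem (by simp [blocksAndEdges])
  constructor
  · rintro ⟨hne, uncovered⟩
    exact (h.cover p q hne).resolve_left fun ⟨b, hb, hmem⟩ => uncovered b hb hmem
  · rintro (rfl | rfl)
    · exact ⟨(h.succ_ne p).symm, edge_uncovered p⟩
    · exact ⟨h.succ_ne q, fun b hb hmem => edge_uncovered q b hb hmem.symm⟩

end IsBlockEdgeCover

theorem leaveIsCycleType_of_equiv {B : Finset (Finset (Fin 24))} {L : List ℕ}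
    {s : Fin 24 → Fin 24} (e : (Σ i : Fin L.length, ZMod (L.get i)) ≃ Fin 24)
    (s_apply : ∀ i k, s (e ⟨i, k⟩) = e ⟨i, k + 1⟩)
    (leaveAdj_iff : ∀ p q, LeaveAdj B p q ↔ q = s p ∨ p = s q) : LeaveIsCycleType B L := by
  have s_eq_iff (p q : Fin 24) : q = s p ↔ ∃ i k, p = e ⟨i, k⟩ ∧ q = e ⟨i, k + 1⟩ := by
    constructor
    · rintro rfl
      obtain ⟨⟨i, k⟩, rfl⟩ := e.surjective p
      exact ⟨i, k, rfl, s_apply i k⟩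
    · rintro ⟨i, k, rfl, rfl⟩
      exact (s_apply i k).symm
  refine ⟨fun i k => e ⟨i, k⟩, e.bijective, fun p q => ?_⟩
  simp only [leaveAdj_iff, s_eq_iff, exists_or]

/-- The index type of a pair of cycles in `LeaveIsCycleType`, as a disjoint sum. -/
def sigmaZModPairEquivSum (m n : ℕ) :
    (Σ i : Fin [m, n].length, ZMod ([m, n].get i)) ≃ ZMod m ⊕ ZMod n where
  toFun
    | ⟨0, k⟩ => .inl k
    | ⟨1, k⟩ => .inr k
  invFun := Sum.elim (fun k => ⟨0, k⟩) fun k => ⟨1, k⟩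
  left_inv
    | ⟨0, _⟩ => rfl
    | ⟨1, _⟩ => rfl
  right_inv
    | .inl _ => rfl
    | .inr _ => rfl

/-- The points arranged in a 4-cycle `0, …, 3` and a 20-cycle `4, …, 23`. The index types `ZMod 4`
and `ZMod 20` are definitionally `Fin 4` and `Fin 20`. -/
def cyclePointEquiv : (Σ i : Fin [4, 20].length, ZMod ([4, 20].get i)) ≃ Fin 24 :=
  (sigmaZModPairEquivSum 4 20).trans (finSumFinEquiv (m := 4) (n := 20))

/-- The successor map of the cycles `(0 1 2 3)` and `(4 5 … 23)`. -/
def cycleSucc : Fin 24 → Fin 24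
  | 3 => 0
  | 23 => 4
  | p => p + 1

theorem cycleSucc_injective : Function.Injective cycleSucc := by
  decide

theorem cycleSucc_cyclePointEquiv (i : Fin [4, 20].length) (k : ZMod ([4, 20].get i)) :
    cycleSucc (cyclePointEquiv ⟨i, k⟩) = cyclePointEquiv ⟨i, k + 1⟩ := by
  have short : ∀ k : Fin 4, cycleSucc (Fin.castAdd 20 k) = Fin.castAdd 20 (k + 1) := by decide
  have long : ∀ k : Fin 20, cycleSucc (Fin.natAdd 4 k) = Fin.natAdd 4 (k + 1) := by decide
  match i, k with
  | 0, k => exact short k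
  | 1, k => exact long k

/-- Representatives of the orbits of blocks under the fifth power of `cycleSucc`. -/
def baseBlocks : Finset (Finset (Fin 24)) :=
  {{0, 2, 4, 14}, {0, 5, 7, 9}, {0, 6, 11, 19}, {0, 8, 12, 15}, {0, 10, 17, 22}, {0, 13, 18, 21},
    {0, 16, 20, 23}, {4, 6, 8, 17}, {4, 7, 13, 19}, {4, 10, 15, 21}, {5, 13, 15, 23},
    {6, 12, 16, 22}}

/-- The packing generated by `baseBlocks` under the fifth power of `cycleSucc`, which has
order 4. -/
def cyclicPacking : Finset (Finset (Fin 24)) :=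
  (range 4).biUnion fun i => baseBlocks.image fun b => b.image cycleSucc^[5 * i]

theorem card_of_mem_baseBlocks : ∀ b ∈ baseBlocks, #b = 4 := by
  simp only [baseBlocks, forall_mem_insert, mem_singleton, forall_eq]
  decide

theorem card_of_mem_cyclicPacking : ∀ b ∈ cyclicPacking, #b = 4 := by
  simp only [cyclicPacking, mem_biUnion, mem_image]
  rintro _ ⟨i, -, b, hb, rfl⟩
  rw [card_image_of_injective _ (cycleSucc_injective.iterate _), card_of_mem_baseBlocks b hb]

theorem card_cyclicPacking : #cyclicPacking = 42 := by
  decide +kernel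

theorem isBlockEdgeCover_cyclicPacking : IsBlockEdgeCover cyclicPacking cycleSucc where
  card_block := card_of_mem_cyclicPacking
  card_le := card_cyclicPacking.le
  succ_ne := by decide
  cover := by decide +kernel

theorem leaveIsCycleType_cyclicPacking : LeaveIsCycleType cyclicPacking [4, 20] :=
  leaveIsCycleType_of_equiv cyclePointEquiv cycleSucc_cyclePointEquiv
    isBlockEdgeCover_cyclicPacking.leaveAdj_iff

/-- There is a 2-(24,4,1) packing with 42 blocks whose leave is a vertex-disjoint
union of cycles of lengths [4, 20], covering all 24 points. -/
theorem exists_max_packing_with_leave_type :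
    ∃ B : Finset (Finset (Fin 24)), IsPacking B ∧ B.card = 42 ∧
      LeaveIsCycleType B [4, 20] :=
  ⟨cyclicPacking, isBlockEdgeCover_cyclicPacking.isPacking, card_cyclicPacking,
    leaveIsCycleType_cyclicPacking⟩
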